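/- If q_σ is a spectral, submultiplicative norm on ℙ(ℂ^N), then for every integer k ≥ 1 one has the equality m_k(q_σ) = k·m(q_σ) in [0,∞]. -/

import Mathlib

open MvPolynomial Filter
open scoped ENNReal

/-- The partial-derivative operator `D^α = ∂^{|α|}/∂x₁^{α₁}⋯∂x_N^{α_N}` on
polynomials in `N` variables. -/
noncomputable def mvDeriv {N : ℕ} (α : Fin N → ℕ) (P : MvPolynomial (Fin N) ℂ) :
    MvPolynomial (Fin N) ℂ :=
  (List.ofFn fun j : Fin N =>
      (fun Q : MvPolynomial (Fin N) ℂ => MvPolynomial.pderiv j Q)^[α j]).foldl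
    (fun Q f => f Q) P

/-- `q` is a norm on the complex vector space `ℙ(ℂ^N)` of polynomials. -/
structure IsPolyNorm {N : ℕ} (q : MvPolynomial (Fin N) ℂ → ℝ) : Prop where
  nonneg : ∀ P, 0 ≤ q P
  definite : ∀ P, q P = 0 → P = 0
  triangle : ∀ P Q, q (P + Q) ≤ q P + q Q
  homog : ∀ (c : ℂ) (P), q (c • P) = ‖c‖ * q P

/-- The Markov exponent `m(α, q) ∈ [0,∞]`: the infimum of the set of `s > 0` such that
`q(D^α P) ≤ M (deg P)^s q(P)` holds for some `M > 0` and all `P` with `deg P ≥ 1`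
(`sInf ∅ = ∞` in `ℝ≥0∞`). -/
noncomputable def mExp {N : ℕ} (q : MvPolynomial (Fin N) ℂ → ℝ) (α : Fin N → ℕ) : ℝ≥0∞ :=
  sInf (ENNReal.ofReal '' {s : ℝ | 0 < s ∧ ∃ M : ℝ, 0 < M ∧
    ∀ P : MvPolynomial (Fin N) ℂ, 1 ≤ P.totalDegree →
      q (mvDeriv α P) ≤ M * (P.totalDegree : ℝ) ^ s * q P})

/-- `m_k(q) = max {m(α,q) : |α| = k}`. -/
noncomputable def mkExp {N : ℕ} (q : MvPolynomial (Fin N) ℂ → ℝ) (k : ℕ) : ℝ≥0∞ :=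
  ⨆ α ∈ {α : Fin N → ℕ | ∑ j, α j = k}, mExp q α

/-- The asymptotic Markov exponent `m*(q) = limsup_k m_k(q)/k`. -/
noncomputable def mStar {N : ℕ} (q : MvPolynomial (Fin N) ℂ → ℝ) : ℝ≥0∞ :=
  Filter.atTop.limsup fun k : ℕ => mkExp q k / (k : ℝ≥0∞)

theorem aux_totalDegree_pderiv {N : ℕ} (i : Fin N) (P : MvPolynomial (Fin N) ℂ) :
    (pderiv i P).totalDegree ≤ P.totalDegree := by
  conv_lhs => rw [P.as_sum, map_sum]
  apply totalDegree_finsetSum_le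
  intro m hm
  rw [pderiv_monomial]
  refine (totalDegree_monomial_le _ _).trans ?_
  refine le_trans ?_ (le_totalDegree hm)
  rw [Finsupp.sum_fintype _ _ (by simp), Finsupp.sum_fintype _ _ (by simp)]
  apply Finset.sum_le_sum
  intro j _
  simp

noncomputable def auxF {N : ℕ} (i : Fin N) (a : MvPolynomial (Fin N) ℂ) (n k : ℕ) :
    MvPolynomial (Fin N) ℂ :=
  ∑ j ∈ Finset.range (n + 1), (n.choose j : MvPolynomial (Fin N) ℂ) * (-a) ^ (n - j) *
    (fun Q : MvPolynomial (Fin N) ℂ => pderiv i Q)^[k] (a ^ j)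

theorem auxF_step {N : ℕ} (i : Fin N) (a : MvPolynomial (Fin N) ℂ) (n k : ℕ) :
    auxF i a (n + 1) (k + 1) = pderiv i (auxF i a (n + 1) k)
      + (n + 1) * pderiv i a * auxF i a n k := by
  have h2 : (n + 1) * pderiv i a * auxF i a n k =
      ∑ j ∈ Finset.range (n + 1 + 1), (((n + 1).choose j * (n + 1 - j) : ℕ) :
        MvPolynomial (Fin N) ℂ) * (-a) ^ (n + 1 - j - 1) * pderiv i a *
        (fun Q : MvPolynomial (Fin N) ℂ => pderiv i Q)^[k] (a ^ j) := by
    rw [Finset.sum_range_succ, auxF, Finset.mul_sum]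
    simp only [Nat.sub_self, Nat.mul_zero, Nat.cast_zero, zero_mul, add_zero]
    apply Finset.sum_congr rfl
    intro j _
    rw [← Nat.choose_mul_succ_eq, show n + 1 - j - 1 = n - j by omega]
    push_cast
    ring
  rw [h2, auxF, auxF, map_sum, ← Finset.sum_add_distrib]
  apply Finset.sum_congr rfl
  intro j _
  rw [Function.iterate_succ_apply', pderiv_mul, pderiv_mul, pderiv_pow, map_neg]
  have : pderiv i (((n + 1).choose j : ℕ) : MvPolynomial (Fin N) ℂ) = 0 :=
    Derivation.map_natCast _ _
  rw [this]
  push_cast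
  ring

theorem auxF_eq {N : ℕ} (i : Fin N) (a : MvPolynomial (Fin N) ℂ) (k : ℕ) :
    ∀ n, k ≤ n → auxF i a n k = if n = k then (k.factorial : MvPolynomial (Fin N) ℂ) *
      (pderiv i a) ^ k else 0 := by
  induction k with
  | zero =>
    intro n _
    have : auxF i a n 0 = (a + -a) ^ n := by
      rw [add_pow, auxF]
      apply Finset.sum_congr rfl
      intro j _
      simp only [Function.iterate_zero, id]
      ring
    rw [this]
    by_cases h : n = 0
    · simp [h]
    · simp [h]
  | succ k ih =>
    intro n hn
    obtain ⟨n, rfl⟩ : ∃ m, n = m + 1 := ⟨n - 1, by omega⟩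
    rw [auxF_step, ih (n + 1) (by omega), ih n (by omega), if_neg (by omega : ¬ n + 1 = k)]
    by_cases h : n = k
    · subst h
      simp only [if_true, map_zero, Nat.factorial_succ]
      push_cast
      ring
    · simp [h]

theorem aux_foldl_not_mem {N : ℕ} (j : Fin N) (k : ℕ) (l : List (Fin N)) (hl : j ∉ l)
    (P : MvPolynomial (Fin N) ℂ) :
    (l.map fun i => (fun Q : MvPolynomial (Fin N) ℂ => pderiv i Q)^[(Pi.single j k : Fin N → ℕ) i]).foldl
      (fun Q f => f Q) P = P := by
  induction l generalizing P with
  | nil => rfl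
  | cons b l ih =>
    simp only [List.mem_cons, not_or] at hl
    simp only [List.map_cons, List.foldl_cons]
    rw [ih hl.2, Pi.single_eq_of_ne (Ne.symm hl.1)]
    rfl

theorem aux_foldl_mem {N : ℕ} (j : Fin N) (k : ℕ) (l : List (Fin N)) (hl : j ∈ l) (hn : l.Nodup)
    (P : MvPolynomial (Fin N) ℂ) :
    (l.map fun i => (fun Q : MvPolynomial (Fin N) ℂ => pderiv i Q)^[(Pi.single j k : Fin N → ℕ) i]).foldl
      (fun Q f => f Q) P = (fun Q : MvPolynomial (Fin N) ℂ => pderiv j Q)^[k] P := by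
  induction l generalizing P with
  | nil => simp at hl
  | cons b l ih =>
    simp only [List.map_cons, List.foldl_cons]
    rw [List.nodup_cons] at hn
    by_cases h : j = b
    · subst h
      rw [aux_foldl_not_mem j k l hn.1, Pi.single_eq_same]
    · rw [ih (by simpa [h] using hl) hn.2, Pi.single_eq_of_ne (Ne.symm h)]
      rfl

theorem mvDeriv_single {N : ℕ} (j : Fin N) (k : ℕ) (P : MvPolynomial (Fin N) ℂ) :
    mvDeriv (Pi.single j k) P = (fun Q : MvPolynomial (Fin N) ℂ => pderiv j Q)^[k] P := by
  rw [mvDeriv, List.ofFn_eq_map]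
  exact aux_foldl_mem j k _ (List.mem_finRange j) (List.nodup_finRange N) P

theorem aux_iter {N : ℕ} (q : MvPolynomial (Fin N) ℂ → ℝ) (K : ℝ) (hK : 0 ≤ K) (d : ℕ)
    (h : ∀ (i : Fin N) (P : MvPolynomial (Fin N) ℂ), P.totalDegree ≤ d → q (pderiv i P) ≤ K * q P)
    (i : Fin N) (k : ℕ) (P : MvPolynomial (Fin N) ℂ) (hP : P.totalDegree ≤ d) :
    ((fun Q : MvPolynomial (Fin N) ℂ => pderiv i Q)^[k] P).totalDegree ≤ d ∧
    q ((fun Q : MvPolynomial (Fin N) ℂ => pderiv i Q)^[k] P) ≤ K ^ k * q P := by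
  induction k with
  | zero => simpa using hP
  | succ k ih =>
    rw [Function.iterate_succ_apply']
    refine ⟨(aux_totalDegree_pderiv _ _).trans ih.1, (h i _ ih.1).trans ?_⟩
    rw [pow_succ', mul_assoc]
    exact mul_le_mul_of_nonneg_left ih.2 hK

theorem aux_foldl {N : ℕ} (q : MvPolynomial (Fin N) ℂ → ℝ) (K : ℝ) (hK : 0 ≤ K) (d : ℕ)
    (h : ∀ (i : Fin N) (P : MvPolynomial (Fin N) ℂ), P.totalDegree ≤ d → q (pderiv i P) ≤ K * q P)
    (α : Fin N → ℕ) (l : List (Fin N)) (P : MvPolynomial (Fin N) ℂ) (hP : P.totalDegree ≤ d) :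
    q ((l.map fun i => (fun Q : MvPolynomial (Fin N) ℂ => pderiv i Q)^[α i]).foldl
      (fun Q f => f Q) P) ≤ K ^ (l.map α).sum * q P := by
  induction l generalizing P with
  | nil => simp
  | cons b l ih =>
    simp only [List.map_cons, List.foldl_cons, List.sum_cons]
    obtain ⟨h1, h2⟩ := aux_iter q K hK d h b (α b) P hP
    refine (ih _ h1).trans ?_
    rw [pow_add, mul_comm (K ^ α b), mul_assoc]
    exact mul_le_mul_of_nonneg_left h2 (by positivity)

theorem aux_mvDeriv {N : ℕ} (q : MvPolynomial (Fin N) ℂ → ℝ) (K : ℝ) (hK : 0 ≤ K) (d : ℕ)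
    (h : ∀ (i : Fin N) (P : MvPolynomial (Fin N) ℂ), P.totalDegree ≤ d → q (pderiv i P) ≤ K * q P)
    (α : Fin N → ℕ) (P : MvPolynomial (Fin N) ℂ) (hP : P.totalDegree ≤ d) :
    q (mvDeriv α P) ≤ K ^ (∑ j, α j) * q P := by
  rw [mvDeriv, List.ofFn_eq_map]
  refine (aux_foldl q K hK d h α _ P hP).trans (le_of_eq ?_)
  congr 2

theorem aux_upper {N : ℕ} (q : MvPolynomial (Fin N) ℂ → ℝ) (hq : IsPolyNorm q)
    (k : ℕ) (hk : 1 ≤ k) : mkExp q k ≤ (k : ℝ≥0∞) * mkExp q 1 := by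
  have hk0 : (k : ℝ≥0∞) ≠ 0 := by simpa using (by omega : k ≠ 0)
  rw [mul_comm]
  rw [← ENNReal.div_le_iff_le_mul (Or.inl hk0) (Or.inl (by simp))]
  apply le_of_forall_gt_imp_ge_of_dense
  intro c hc
  by_cases hct : c = ⊤
  · simp [hct]
  rw [ENNReal.div_le_iff_le_mul (Or.inl hk0) (Or.inl (by simp))]
  have hcs : c = ENNReal.ofReal c.toReal := (ENNReal.ofReal_toReal hct).symm
  have hs : 0 < c.toReal := ENNReal.toReal_pos (ne_bot_of_gt hc) hct
  generalize c.toReal = s at hcs hs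
  subst hcs
  have hq0 : q 0 = 0 := by simpa using hq.homog 0 0
  have key : ∀ j : Fin N, ∃ M : ℝ, 0 < M ∧ ∀ P : MvPolynomial (Fin N) ℂ, 1 ≤ P.totalDegree →
      q (pderiv j P) ≤ M * (P.totalDegree : ℝ) ^ s * q P := by
    intro j
    have h1 : mExp q (Pi.single j 1) < ENNReal.ofReal s := by
      refine lt_of_le_of_lt ?_ hc
      exact le_iSup₂ (f := fun (α : Fin N → ℕ) (_ : α ∈ {α : Fin N → ℕ | ∑ j, α j = 1}) => mExp q α)
        (Pi.single j 1) (by simp)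
    rw [mExp, sInf_lt_iff] at h1
    obtain ⟨_, ⟨t, ⟨ht, M, hM, hb⟩, rfl⟩, hts⟩ := h1
    rw [ENNReal.ofReal_lt_ofReal_iff hs] at hts
    refine ⟨M, hM, fun P hP => ?_⟩
    have := hb P hP
    rw [mvDeriv_single] at this
    refine this.trans ?_
    have h1 : (1 : ℝ) ≤ P.totalDegree := by exact_mod_cast hP
    have := Real.rpow_le_rpow_of_exponent_le h1 hts.le
    have := hq.nonneg P
    gcongr
  choose M hM hb using key
  have hS : ∀ j, M j ≤ 1 + ∑ i, M i := fun j => by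
    have := Finset.single_le_sum (fun i _ => (hM i).le) (Finset.mem_univ j)
    linarith
  have hSp : 0 < 1 + ∑ i, M i := by
    have := Finset.sum_nonneg (fun i (_ : i ∈ Finset.univ) => (hM i).le)
    linarith
  generalize 1 + ∑ i, M i = S at hS hSp
  refine iSup₂_le fun α hα => ?_
  refine sInf_le ⟨s * k, ⟨by positivity, S ^ k, by positivity, ?_⟩, ?_⟩
  · intro P hP
    have := aux_mvDeriv q (S * (P.totalDegree : ℝ) ^ s) (by positivity) P.totalDegree
      (fun i Q hQ => ?_) α P le_rfl
    · rw [show ∑ j, α j = k from hα, mul_pow, ← Real.rpow_natCast (_ ^ s), ← Real.rpow_mul (by positivity)] at this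
      exact this
    · have hQn := hq.nonneg Q
      rcases Nat.eq_zero_or_pos Q.totalDegree with h | h
      · rw [totalDegree_eq_zero_iff_eq_C] at h
        rw [h, pderiv_C, hq0, ← h]
        positivity
      · refine (hb i Q h).trans ?_
        have := hS i
        have : (Q.totalDegree : ℝ) ≤ P.totalDegree := by exact_mod_cast hQ
        gcongr
  · rw [ENNReal.ofReal_mul hs.le, ENNReal.ofReal_natCast]

theorem aux_degree_pow {N : ℕ} (P : MvPolynomial (Fin N) ℂ) (hP : P ≠ 0) (j : ℕ) :
    (P ^ j).totalDegree = j * P.totalDegree := by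
  induction j with
  | zero => simp
  | succ j ih => rw [pow_succ, totalDegree_mul_of_isDomain (pow_ne_zero _ hP) hP, ih]; ring

theorem aux_sum {N : ℕ} (q : MvPolynomial (Fin N) ℂ → ℝ) (hq : IsPolyNorm q) {ι : Type*}
    (s : Finset ι) (f : ι → MvPolynomial (Fin N) ℂ) : q (∑ i ∈ s, f i) ≤ ∑ i ∈ s, q (f i) := by
  have hq0 : q 0 = 0 := by simpa using hq.homog 0 0
  exact Finset.le_sum_of_subadditive q hq0.le hq.triangle s f

theorem aux_lower {N : ℕ} (q : MvPolynomial (Fin N) ℂ → ℝ) (hq : IsPolyNorm q)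
    (hspec : ∀ (P : MvPolynomial (Fin N) ℂ) (n : ℕ), 1 ≤ n → q (P ^ n) = q P ^ n)
    (hsub : ∀ P Q : MvPolynomial (Fin N) ℂ, q (P * Q) ≤ q P * q Q)
    (k : ℕ) (hk : 1 ≤ k) (i : Fin N) :
    mExp q (Pi.single i 1) * k ≤ mExp q (Pi.single i k) := by
  have hq0 : q 0 = 0 := by simpa using hq.homog 0 0
  have hq1 : q 1 = 1 := by
    have h := hspec 1 2 (by norm_num)
    rw [one_pow] at h
    have h1 : q 1 ≠ 0 := fun h => one_ne_zero (hq.definite 1 h)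
    have : q 1 * (q 1 - 1) = 0 := by linarith
    rcases mul_eq_zero.1 this with h | h
    · exact absurd h h1
    · linarith
  have hpow : ∀ (P : MvPolynomial (Fin N) ℂ) (n : ℕ), q (P ^ n) = q P ^ n := by
    intro P n
    rcases Nat.eq_zero_or_pos n with h | h
    · simp [h, hq1]
    · exact hspec P n h
  have hnat : ∀ (n : ℕ) (P : MvPolynomial (Fin N) ℂ), q ((n : MvPolynomial (Fin N) ℂ) * P) = n * q P := by
    intro n P
    have := hq.homog n P
    rw [Complex.norm_natCast] at this
    rw [← this, smul_eq_C_mul]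
    simp
  have hneg : ∀ P, q (-P) = q P := by
    intro P
    simpa using hq.homog (-1) P
  rw [mExp, mExp]
  refine le_sInf ?_
  rintro _ ⟨s, ⟨hs, M, hM, hb⟩, rfl⟩
  have hkr : (0 : ℝ) < k := by exact_mod_cast hk
  have hfin : ENNReal.ofReal s = ENNReal.ofReal (s / k) * k := by
    rw [← ENNReal.ofReal_natCast, ← ENNReal.ofReal_mul (by positivity)]
    congr 1
    field_simp
  rw [hfin]
  gcongr
  set A : ℝ := ∑ j ∈ Finset.range (k + 1), (k.choose j : ℝ) * (M * (j : ℝ) ^ s) with hA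
  have hA0 : 0 ≤ A := by positivity
  refine sInf_le ⟨s / k, ⟨by positivity, A + 1, by positivity, ?_⟩, rfl⟩
  intro P hP
  rw [mvDeriv_single]
  change q (pderiv i P) ≤ _
  have hPn := hq.nonneg P
  have hP0 : P ≠ 0 := by rintro rfl; simp at hP
  have hd1 : (1 : ℝ) ≤ P.totalDegree := by exact_mod_cast hP
  have hid := auxF_eq i P k k le_rfl
  rw [if_pos rfl] at hid
  have h1 : (k.factorial : ℝ) * q (pderiv i P) ^ k ≤ A * (P.totalDegree : ℝ) ^ s * q P ^ k := by
    rw [← hpow, ← hnat, ← hid, auxF]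
    refine (aux_sum q hq _ _).trans ?_
    rw [hA, Finset.sum_mul, Finset.sum_mul]
    apply Finset.sum_le_sum
    intro j hj
    rw [mul_assoc, hnat]
    have hjk : j ≤ k := by simpa [Nat.lt_succ_iff] using hj
    have h2 : q ((fun Q : MvPolynomial (Fin N) ℂ => pderiv i Q)^[k] (P ^ j)) ≤
        M * ((j : ℝ) ^ s * (P.totalDegree : ℝ) ^ s) * q P ^ j := by
      rcases Nat.eq_zero_or_pos j with h | h
      · subst h
        obtain ⟨k, rfl⟩ : ∃ m, k = m + 1 := ⟨k - 1, by omega⟩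
        rw [Function.iterate_succ_apply, pow_zero, pderiv_one,
          Function.iterate_fixed (map_zero _), hq0]
        positivity
      · have := hb (P ^ j) (by rw [aux_degree_pow P hP0]; exact Nat.mul_pos h hP)
        rw [mvDeriv_single, aux_degree_pow P hP0, hpow, Nat.cast_mul,
          Real.mul_rpow (by positivity) (by positivity)] at this
        exact this
    calc (k.choose j : ℝ) * q ((-P) ^ (k - j) * (fun Q : MvPolynomial (Fin N) ℂ => pderiv i Q)^[k] (P ^ j))
        ≤ (k.choose j : ℝ) * (q P ^ (k - j) * (M * ((j : ℝ) ^ s * (P.totalDegree : ℝ) ^ s) * q P ^ j)) := by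
          gcongr
          refine (hsub _ _).trans ?_
          rw [hpow, hneg]
          gcongr
      _ = _ := by
          rw [show q P ^ k = q P ^ (k - j) * q P ^ j by rw [← pow_add, Nat.sub_add_cancel hjk]]
          ring
  have h3 : q (pderiv i P) ^ k ≤ ((A + 1) * (P.totalDegree : ℝ) ^ (s / k) * q P) ^ k := by
    have hf : (1 : ℝ) ≤ k.factorial := by exact_mod_cast Nat.factorial_pos k
    have h4 : q (pderiv i P) ^ k ≤ k.factorial * q (pderiv i P) ^ k :=
      le_mul_of_one_le_left (pow_nonneg (hq.nonneg _) _) hf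
    refine h4.trans (h1.trans ?_)
    rw [mul_pow, mul_pow, ← Real.rpow_natCast (_ ^ (s / k)), ← Real.rpow_mul (by positivity),
      div_mul_cancel₀ _ hkr.ne']
    have : A ≤ (A + 1) ^ k := by
      have := le_self_pow₀ (by linarith : 1 ≤ A + 1) (by omega : k ≠ 0)
      linarith
    gcongr
  exact le_of_pow_le_pow_left₀ (by omega) (by positivity) h3

/-- If `q_σ` is a spectral, submultiplicative norm on `ℙ(ℂ^N)`, then for
every integer `k ≥ 1` one has `m_k(q_σ) = k · m(q_σ)` in `[0,∞]`. -/
theorem statement2 {N : ℕ} (qσ : MvPolynomial (Fin N) ℂ → ℝ) (hqσ : IsPolyNorm qσ)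
    (hspec : ∀ (P : MvPolynomial (Fin N) ℂ) (n : ℕ), 1 ≤ n → qσ (P ^ n) = qσ P ^ n)
    (hsub : ∀ P Q : MvPolynomial (Fin N) ℂ, qσ (P * Q) ≤ qσ P * qσ Q)
    (k : ℕ) (hk : 1 ≤ k) :
    mkExp qσ k = (k : ℝ≥0∞) * mkExp qσ 1 := by
  apply le_antisymm (aux_upper qσ hqσ k hk)
  have hk0 : (k : ℝ≥0∞) ≠ 0 := by simpa using (by omega : k ≠ 0)
  rw [mul_comm, ← ENNReal.le_div_iff_mul_le (Or.inl hk0) (Or.inl (by simp))]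
  refine iSup₂_le fun α hα => ?_
  rw [ENNReal.le_div_iff_mul_le (Or.inl hk0) (Or.inl (by simp))]
  have hα' : ∑ j, α j = 1 := hα
  obtain ⟨i, hi⟩ : ∃ i, α = Pi.single i 1 := by
    obtain ⟨i, _, hi⟩ := Finset.exists_ne_zero_of_sum_ne_zero (by rw [hα']; exact one_ne_zero)
    refine ⟨i, ?_⟩
    have h := Finset.add_sum_erase Finset.univ α (Finset.mem_univ i)
    have h0 : ∑ j ∈ Finset.univ.erase i, α j = 0 := by omega
    rw [Finset.sum_eq_zero_iff] at h0
    funext j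
    by_cases hj : j = i
    · subst hj
      rw [Pi.single_eq_same]
      have : α j ≤ 1 := by omega
      omega
    · rw [Pi.single_eq_of_ne hj]
      exact h0 j (by simp [hj])
  rw [hi]
  refine (aux_lower qσ hqσ hspec hsub k hk i).trans ?_
  exact le_iSup₂ (f := fun (α : Fin N → ℕ) (_ : α ∈ {α : Fin N → ℕ | ∑ j, α j = k}) => mExp qσ α)
    (Pi.single i k) (by simp)
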